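/- Let H be a reflexive digraph and let T be a tournament on V(H) consistent with H. Suppose T has three vertices u, v, w with u → v, v → w, and w → u in T. If v' → w' in T and (v',w') → (v,w) is an edge of the implication graph H*, then u → v', v' → w', and w' → u in T. -/

import Mathlib

/-- A digraph on vertex type `V` is given by its edge relation `E : V → V → Prop`
(loops allowed).  The min-ordering property for a strict linear order `r`:
for any edges `(u,v)` and `(u',v')` with `r u u'` and `r v' v`, `(u,v')` is also an edge. -/
def MinOrderProp {V : Type*} (E r : V → V → Prop) : Prop :=
  ∀ u v u' v' : V, E u v → E u' v' → r u u' → r v' v → E u v'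

/-- The edge relation of the pair digraph `H⁺` of a digraph with edge relation `E`:
for all vertices `u, u', v, v'`, there are edges `(u,u') → (v,v')` and `(v',v) → (u',u)`
whenever `E u v`, `E u' v'`, `¬ E u v'`, and the endpoints have distinct coordinates. -/
def pairEdge {V : Type*} (E : V → V → Prop) (p q : V × V) : Prop :=
  ∃ u u' v v' : V, u ≠ u' ∧ v ≠ v' ∧ E u v ∧ E u' v' ∧ ¬ E u v' ∧
    ((p = (u, u') ∧ q = (v, v')) ∨ (p = (v', v) ∧ q = (u', u)))

/-- The edge relation of the implication graph `H*` of a reflexive digraph with edge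
relation `E`: for any three distinct vertices `u, v, w`, there are edges
`(u,v) → (w,v)` and `(v,w) → (v,u)` iff `[E u w ∧ ¬ E u v]` or `[E w u ∧ ¬ E v u]`. -/
def implEdge {V : Type*} (E : V → V → Prop) (p q : V × V) : Prop :=
  ∃ u v w : V, u ≠ v ∧ v ≠ w ∧ u ≠ w ∧
    ((E u w ∧ ¬ E u v) ∨ (E w u ∧ ¬ E v u)) ∧
    ((p = (u, v) ∧ q = (w, v)) ∨ (p = (v, w) ∧ q = (v, u)))

/-- A tournament on `V`: for each pair of distinct vertices exactly one of the two
directed edges is present, and there are no loops. -/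
def IsTournamentRel {V : Type*} (T : V → V → Prop) : Prop :=
  (∀ u, ¬ T u u) ∧ ∀ u v : V, u ≠ v → (T u v ↔ ¬ T v u)

/-- A tournament (orientation of the complete graph) `T` is consistent with the digraph `E`
if for every vertex `(u,v)` of the implication graph and every vertex `(u',v')` reachable
from `(u,v)` by a directed walk in the implication graph, `u → v` in `T` implies
`u' → v'` in `T`. -/
def ConsistentWith {V : Type*} (E T : V → V → Prop) : Prop :=
  ∀ u v u' v' : V, u ≠ v → u' ≠ v' →
    Relation.ReflTransGen (implEdge E) (u, v) (u', v') → T u v → T u' v'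

/-- `u, v` form an invertible pair of the digraph `E`: they are distinct and `(u,v)` and
`(v,u)` lie in the same strong component of the pair digraph. -/
def InvertiblePair {V : Type*} (E : V → V → Prop) (u v : V) : Prop :=
  u ≠ v ∧ Relation.ReflTransGen (pairEdge E) (u, v) (v, u) ∧
    Relation.ReflTransGen (pairEdge E) (v, u) (u, v)

/-- The tournament obtained from `T` by reversing the direction of all edges `(x, y)` of `T`
with `u → x`, `x → y`, `y → u` in `T` (the set `E_u`). -/
def revTri {V : Type*} (T : V → V → Prop) (u : V) (x y : V) : Prop :=
  (T x y ∧ ¬ (T u x ∧ T x y ∧ T y u)) ∨ (T y x ∧ T u y ∧ T x u)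

/-!
The engine is the path rule: if `p → q → r` in `T` and `E p r`, then `E p q`, for otherwise
`(p, q) → (r, q)` would be an edge of the implication graph, forcing `r → q`. The implication
graph is unchanged when all edges of `E` are reversed, so the path rule also holds for the
converse of `E`. Going around a directed triangle of `T`, the two rules link all six possible
edges in one cycle of implications, so the triangle is either complete or edgeless in `E`. An
edge of the implication graph into `(v, w)` replaces one endpoint of the arc `v → w`; a wrong
arc between `u` and the new endpoint would, by the path rule, produce the edge whose absence
defines that implication edge.
-/

section

variable {V : Type*} {E T : V → V → Prop}

theorem IsTournamentRel.ne (hT : IsTournamentRel T) {p q : V} (hpq : T p q) : p ≠ q := by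
  rintro rfl
  exact hT.1 p hpq

theorem IsTournamentRel.asymm (hT : IsTournamentRel T) {p q : V} (hpq : T p q) : ¬ T q p :=
  (hT.2 p q (hT.ne hpq)).1 hpq

theorem IsTournamentRel.ne_of_path (hT : IsTournamentRel T) {p q r : V}
    (hpq : T p q) (hqr : T q r) : p ≠ r := by
  rintro rfl
  exact hT.asymm hpq hqr

theorem implEdge_flip (E : V → V → Prop) : implEdge (flip E) = implEdge E := by
  funext p q
  simp only [implEdge, flip, or_comm]

theorem ConsistentWith.flip (hcons : ConsistentWith E T) : ConsistentWith (flip E) T := by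
  rwa [ConsistentWith, implEdge_flip]

theorem ConsistentWith.rel_of_implEdge (hcons : ConsistentWith E T) {p q p' q' : V}
    (hpq : p ≠ q) (hpq' : p' ≠ q') (h : implEdge E (p, q) (p', q')) (hTpq : T p q) : T p' q' :=
  hcons p q p' q' hpq hpq' (.single h) hTpq

theorem ConsistentWith.edge_fst_mid_of_path (hcons : ConsistentWith E T)
    (hT : IsTournamentRel T) {p q r : V} (hpq : T p q) (hqr : T q r) (hE : E p r) : E p q := by
  by_contra hnE
  have himpl : implEdge E (p, q) (r, q) :=
    ⟨p, q, r, hT.ne hpq, hT.ne hqr, hT.ne_of_path hpq hqr, .inl ⟨hE, hnE⟩, .inl ⟨rfl, rfl⟩⟩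
  exact hT.asymm hqr (hcons.rel_of_implEdge (hT.ne hpq) (hT.ne hqr).symm himpl hpq)

theorem ConsistentWith.edge_mid_fst_of_path (hcons : ConsistentWith E T)
    (hT : IsTournamentRel T) {p q r : V} (hpq : T p q) (hqr : T q r) (hE : E r p) : E q p :=
  hcons.flip.edge_fst_mid_of_path hT hpq hqr hE

theorem ConsistentWith.tfae_edge_of_triangle (hcons : ConsistentWith E T)
    (hT : IsTournamentRel T) {u v w : V} (huv : T u v) (hvw : T v w) (hwu : T w u) :
    [E w u, E v u, E v w, E u w, E u v, E w v].TFAE := by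
  tfae_have 1 → 2 := hcons.edge_mid_fst_of_path hT huv hvw
  tfae_have 2 → 3 := hcons.edge_fst_mid_of_path hT hvw hwu
  tfae_have 3 → 4 := hcons.edge_mid_fst_of_path hT hwu huv
  tfae_have 4 → 5 := hcons.edge_fst_mid_of_path hT huv hvw
  tfae_have 5 → 6 := hcons.edge_mid_fst_of_path hT hvw hwu
  tfae_have 6 → 1 := hcons.edge_fst_mid_of_path hT hwu huv
  tfae_finish

theorem ConsistentWith.rel_of_edge_of_not_edge_of_path (hcons : ConsistentWith E T)
    (hT : IsTournamentRel T) {u v w x : V} (huv : T u v) (hwu : T w u) (hxw : T x w)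
    (hE : E x v) (hnE : ¬ E x w) : T u x := by
  refine (hT.2 u x (hT.ne_of_path hxw hwu).symm).2 fun hxu ↦ hnE ?_
  have hExu : E x u := hcons.edge_fst_mid_of_path hT hxu huv hE
  exact hcons.edge_fst_mid_of_path hT hxw hwu hExu

theorem ConsistentWith.rel_of_edge_of_not_edge_of_triangle (hcons : ConsistentWith E T)
    (hT : IsTournamentRel T) {u v w x : V} (huv : T u v) (hvw : T v w) (hwu : T w u)
    (hvx : T v x) (hE : E w x) (hnE : ¬ E w v) : T x u := by
  refine (hT.2 x u (hT.ne_of_path huv hvx).symm).2 fun hux ↦ hnE ?_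
  have hEwu : E w u := hcons.edge_fst_mid_of_path hT hwu hux hE
  exact ((hcons.tfae_edge_of_triangle hT huv hvw hwu).out 0 5).1 hEwu

end

theorem stmt_10_general {V : Type*} {E T : V → V → Prop} (hT : IsTournamentRel T)
    (hcons : ConsistentWith E T) {u v w v' w' : V} (huv : T u v) (hvw : T v w) (hwu : T w u)
    (hvw' : T v' w') (himpl : implEdge E (v', w') (v, w)) :
    T u v' ∧ T v' w' ∧ T w' u := by
  obtain ⟨a, b, c, -, -, -, hE, ⟨⟨⟩, ⟨⟩⟩ | ⟨⟨⟩, ⟨⟩⟩⟩ := himpl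
  · refine ⟨?_, hvw', hwu⟩
    rcases hE with ⟨hE, hnE⟩ | ⟨hE, hnE⟩
    · exact hcons.rel_of_edge_of_not_edge_of_path hT huv hwu hvw' hE hnE
    · exact hcons.flip.rel_of_edge_of_not_edge_of_path hT huv hwu hvw' hE hnE
  · refine ⟨huv, hvw', ?_⟩
    rcases hE with ⟨hE, hnE⟩ | ⟨hE, hnE⟩
    · exact hcons.rel_of_edge_of_not_edge_of_triangle hT huv hvw hwu hvw' hE hnE
    · exact hcons.flip.rel_of_edge_of_not_edge_of_triangle hT huv hvw hwu hvw' hE hnE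

/-- Let `T` be a tournament consistent with a reflexive digraph `H`, and
suppose `u → v`, `v → w`, `w → u` in `T`.  If `v' → w'` in `T` and `(v',w') → (v,w)` is
an edge of the implication graph `H*`, then `u → v'`, `v' → w'`, `w' → u` in `T`. -/
theorem stmt_10 {V : Type*} [Fintype V] (E : V → V → Prop) (hrefl : ∀ v, E v v)
    (T : V → V → Prop) (hT : IsTournamentRel T) (hcons : ConsistentWith E T)
    (u v w v' w' : V) (h1 : T u v) (h2 : T v w) (h3 : T w u)
    (h4 : T v' w') (h5 : implEdge E (v', w') (v, w)) :
    T u v' ∧ T v' w' ∧ T w' u := by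
  exact stmt_10_general hT hcons h1 h2 h3 h4 h5
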